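/- arXiv:1803.03637 — 2 statements merged into one kernel-verified Lean document; each statement's English description precedes it below -/
import Mathlib

section
/- The real 3-arrangement with defining polynomial y·(x−y)·(x²−z²)·(y²−z²) is not supersolvable: its intersection lattice contains no modular coatom, i.e., no rank-2 element X such that every rank-2 element Y satisfies X ∩ Y ∈ L(A) with rank(X ∨ Y) + rank(X ∧ Y) = rank(X) + rank(Y). -/
/-!
View rank-2 flats as points, and hyperplanes of the arrangement as lines, of the real projective
plane. If `X` is a modular coatom, then for every rank-2 flat `Y` the rank identity reads
`rk (X ⊓ Y) + rk (X ∧ Y) = 4`; as ranks are at most 3, the meet `X ∧ Y` cannot be the whole space,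
so some hyperplane of the arrangement contains both `X` and `Y`.

There are six double points, that is, rank-2 flats lying on exactly two hyperplanes:
`y = x - y = 0`, `x ± z = 0`, `x - z = y + z = 0`, `x + z = y - z = 0`, `y = x - z = 0` and
`y = x + z = 0`. A modular `X`, spanned by `v ≠ 0`, would have `v` on one of the two hyperplanes
through each of these points. Those six conditions together force `v = 0`: if `y ≠ 0`, then
`x = y`, `x = z` and `x = -z`; if `y = 0`, then `x = ± z`, and the third and fourth conditions
give `z = 0`.
-/

/-- A nonzero vector avoids both hyperplanes through at least one of the six double points. -/
lemma exists_missed_double_point (x y z : ℝ) (h : ¬ (x = 0 ∧ y = 0 ∧ z = 0)) :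
    (y ≠ 0 ∧ x - y ≠ 0) ∨ (x + z ≠ 0 ∧ x - z ≠ 0) ∨ (x - z ≠ 0 ∧ y + z ≠ 0) ∨
      (x + z ≠ 0 ∧ y - z ≠ 0) ∨ (y ≠ 0 ∧ x - z ≠ 0) ∨ (y ≠ 0 ∧ x + z ≠ 0) := by
  grind

/-- If two members `H`, `K` of `A` meet in the line spanned by `p`, and no member of `A` contains
both `p` and the vector `v` of `X`, then the flat `H ⊓ K` violates the modularity of `X`. -/
lemma not_modular_of_missed {A : Set (Submodule ℝ (Fin 3 → ℝ))}
    {X H K : Submodule ℝ (Fin 3 → ℝ)} {v p : Fin 3 → ℝ} (hv : v ∈ X)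
    (hX : 3 - Module.finrank ℝ X = 2) (hH : H ∈ A) (hK : K ∈ A) (hp : p ≠ 0)
    (hHK : H ⊓ K = Submodule.span ℝ {p}) (hmiss : ∀ J ∈ A, v ∈ J → p ∉ J)
    (hmod : ∀ Y : Submodule ℝ (Fin 3 → ℝ), (∃ S ⊆ A, Y = sInf S) →
      3 - Module.finrank ℝ Y = 2 →
      3 - Module.finrank ℝ (X ⊓ Y : Submodule ℝ (Fin 3 → ℝ)) +
        (3 - Module.finrank ℝ (sInf {J | J ∈ A ∧ X ≤ J ∧ Y ≤ J} : Submodule ℝ (Fin 3 → ℝ))) =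
      3 - Module.finrank ℝ X + (3 - Module.finrank ℝ Y)) : False := by
  have hY : 3 - Module.finrank ℝ (H ⊓ K : Submodule ℝ (Fin 3 → ℝ)) = 2 := by
    rw [hHK, finrank_span_singleton hp]
  have hempty : {J | J ∈ A ∧ X ≤ J ∧ H ⊓ K ≤ J} = ∅ := by
    ext J
    simp only [Set.mem_ofPred_eq, Set.mem_empty_iff_false, iff_false]
    rintro ⟨hJ, hXJ, hYJ⟩
    refine hmiss J hJ (hXJ hv) (hYJ ?_)
    rw [hHK]
    exact Submodule.mem_span_singleton_self p
  have h := hmod (H ⊓ K) ⟨{H, K}, by grind, by rw [sInf_pair]⟩ hY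
  rw [hempty, sInf_empty, finrank_top, Module.finrank_fin_fun, hX, hY] at h
  omega


/-- The real 3-arrangement with defining polynomial `y·(x−y)·(x²−z²)·(y²−z²)` is
not supersolvable: its intersection lattice (ordered by reverse inclusion, so
join = intersection, meet = intersection of all hyperplanes containing both)
contains no modular coatom, i.e. no rank-2 element `X` such that every rank-2
element `Y` satisfies `rank(X ∨ Y) + rank(X ∧ Y) = rank X + rank Y`. -/
theorem stmt_10 :
    let pr : Fin 3 → ((Fin 3 → ℝ) →ₗ[ℝ] ℝ) := fun i => LinearMap.proj i
    let A : Set (Submodule ℝ (Fin 3 → ℝ)) :=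
      { LinearMap.ker (pr 1), LinearMap.ker (pr 0 - pr 1),
        LinearMap.ker (pr 0 + pr 2), LinearMap.ker (pr 0 - pr 2),
        LinearMap.ker (pr 1 + pr 2), LinearMap.ker (pr 1 - pr 2) }
    let L : Set (Submodule ℝ (Fin 3 → ℝ)) := {X | ∃ S ⊆ A, X = sInf S}
    let rk : Submodule ℝ (Fin 3 → ℝ) → ℕ := fun X => 3 - Module.finrank ℝ X
    ¬ ∃ X ∈ L, rk X = 2 ∧ ∀ Y ∈ L, rk Y = 2 →
        X ⊓ Y ∈ L ∧
          rk (X ⊓ Y) + rk (sInf {H | H ∈ A ∧ X ≤ H ∧ Y ≤ H}) = rk X + rk Y := by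
  intro pr A L rk
  rintro ⟨X, -, hX, hmod⟩
  have hX' : 3 - Module.finrank ℝ X = 2 := hX
  have hmod' := fun Y hY hY2 => (hmod Y hY hY2).2
  have hbot : X ≠ ⊥ := by
    rintro rfl
    simp at hX'
  obtain ⟨v, hv, hv0⟩ := X.exists_mem_ne_zero_of_ne_bot hbot
  have hne : ¬ (v 0 = 0 ∧ v 1 = 0 ∧ v 2 = 0) := by
    rintro ⟨h0, h1, h2⟩
    apply hv0
    ext i
    fin_cases i <;> assumption
  rcases exists_missed_double_point _ _ _ hne with h | h | h | h | h | h
  · refine not_modular_of_missed (p := ![0, 0, 1]) (H := LinearMap.ker (pr 1))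
      (K := LinearMap.ker (pr 0 - pr 1)) hv hX' (by simp [A]) (by simp [A]) (by simp) ?_ ?_ hmod'
    · ext w
      simp [pr, Submodule.mem_span_singleton, funext_iff, Fin.forall_fin_succ]
      grind
    · simp [A, pr]
      grind
  · refine not_modular_of_missed (p := ![0, 1, 0]) (H := LinearMap.ker (pr 0 + pr 2))
      (K := LinearMap.ker (pr 0 - pr 2)) hv hX' (by simp [A]) (by simp [A]) (by simp) ?_ ?_ hmod'
    · ext w
      simp [pr, Submodule.mem_span_singleton, funext_iff, Fin.forall_fin_succ]
      grind
    · simp [A, pr]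
      grind
  · refine not_modular_of_missed (p := ![1, -1, 1]) (H := LinearMap.ker (pr 0 - pr 2))
      (K := LinearMap.ker (pr 1 + pr 2)) hv hX' (by simp [A]) (by simp [A]) (by simp) ?_ ?_ hmod'
    · ext w
      simp [pr, Submodule.mem_span_singleton, funext_iff, Fin.forall_fin_succ]
      grind
    · simp [A, pr]
      grind
  · refine not_modular_of_missed (p := ![1, -1, -1]) (H := LinearMap.ker (pr 0 + pr 2))
      (K := LinearMap.ker (pr 1 - pr 2)) hv hX' (by simp [A]) (by simp [A]) (by simp) ?_ ?_ hmod'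
    · ext w
      simp [pr, Submodule.mem_span_singleton, funext_iff, Fin.forall_fin_succ]
      grind
    · simp [A, pr]
      grind
  · refine not_modular_of_missed (p := ![1, 0, 1]) (H := LinearMap.ker (pr 1))
      (K := LinearMap.ker (pr 0 - pr 2)) hv hX' (by simp [A]) (by simp [A]) (by simp) ?_ ?_ hmod'
    · ext w
      simp [pr, Submodule.mem_span_singleton, funext_iff, Fin.forall_fin_succ]
      grind
    · simp [A, pr]
      grind
  · refine not_modular_of_missed (p := ![1, 0, -1]) (H := LinearMap.ker (pr 1))
      (K := LinearMap.ker (pr 0 + pr 2)) hv hX' (by simp [A]) (by simp [A]) (by simp) ?_ ?_ hmod'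
    · ext w
      simp [pr, Submodule.mem_span_singleton, funext_iff, Fin.forall_fin_succ]
      grind
    · simp [A, pr]
      grind
end

section
/- The restriction of the D₄ ideal arrangement A_I (with defining polynomial (x₁−x₂)(x₁−x₃)(x₂²−x₃²)(x₁²−x₄²)(x₂²−x₄²)(x₃²−x₄²)) to the hyperplane H = ker(x₂ − x₃) is not a free arrangement: the module of logarithmic derivations D(A_I^H) of the 3-arrangement with defining polynomial y(x−y)(x²−z²)(y²−z²) is not a free module over ℂ[x, y, z]. -/
/-!
Write `E = (x, y, z)` for the Euler derivation. Every logarithmic derivation of this arrangement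
agrees with a multiple of `E` up to degree two. Hence `x θ₁ - y θ₀`, which vanishes for `θ = E`, has
no terms of degree below four when `θ ∈ D` (`cross_coeff_eq_zero`), so its coefficients in degree
four are `R`-linear functionals on `D` with values in the residue field `ℂ = R / (x, y, z)`. The same
holds for the coefficient of `x` in `θ₀`, because derivations in `D` have no constant term.

The coefficient of `x` in `θ₀` and those of `xy³`, `x³y`, `y³z` in `x θ₁ - y θ₀` therefore
give a map `D → ℂ⁴`, semilinear along `R → ℂ`. It is surjective, because it takes
`E`, `(y(x² - z²), y(y² - z²), 0)`, `((x² - z²)(x - y), 0, 0)` and `y (yz, xz, xy)`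
to the standard basis vectors up to sign. So `D` needs at least four generators,
whereas a free submodule of `R³` has a basis of at most three elements.
-/

open MvPolynomial

namespace IdealRestriction

/-! ### Coefficients of polynomials in three variables -/

/-- The exponent of the monomial `x ^ a * y ^ b * z ^ c`. -/
noncomputable def expo (a b c : ℕ) : Fin 3 →₀ ℕ := Finsupp.equivFunOnFinite.symm ![a, b, c]

/-- The coefficient of `x ^ a * y ^ b * z ^ c` in `p`. -/
noncomputable def cf (p : MvPolynomial (Fin 3) ℂ) (a b c : ℕ) : ℂ := coeff (expo a b c) p

lemma cf_add (p q : MvPolynomial (Fin 3) ℂ) (a b c : ℕ) :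
    cf (p + q) a b c = cf p a b c + cf q a b c := coeff_add _ _ _

lemma cf_sub (p q : MvPolynomial (Fin 3) ℂ) (a b c : ℕ) :
    cf (p - q) a b c = cf p a b c - cf q a b c := coeff_sub _ _ _ _

lemma cf_zero (a b c : ℕ) : cf 0 a b c = 0 := coeff_zero _

lemma expo_succ_X (a b c : ℕ) :
    expo (a + 1) b c = expo a b c + Finsupp.single 0 1 := by
  ext i; fin_cases i <;> simp [expo]

lemma expo_succ_Y (a b c : ℕ) :
    expo a (b + 1) c = expo a b c + Finsupp.single 1 1 := by
  ext i; fin_cases i <;> simp [expo]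

lemma expo_succ_Z (a b c : ℕ) :
    expo a b (c + 1) = expo a b c + Finsupp.single 2 1 := by
  ext i; fin_cases i <;> simp [expo]

lemma cf_X_succ (p : MvPolynomial (Fin 3) ℂ) (a b c : ℕ) :
    cf (X 0 * p) (a + 1) b c = cf p a b c := by
  rw [cf, expo_succ_X, add_comm, coeff_X_mul, cf]

lemma cf_Y_succ (p : MvPolynomial (Fin 3) ℂ) (a b c : ℕ) :
    cf (X 1 * p) a (b + 1) c = cf p a b c := by
  rw [cf, expo_succ_Y, add_comm, coeff_X_mul, cf]

lemma cf_Z_succ (p : MvPolynomial (Fin 3) ℂ) (a b c : ℕ) :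
    cf (X 2 * p) a b (c + 1) = cf p a b c := by
  rw [cf, expo_succ_Z, add_comm, coeff_X_mul, cf]

lemma cf_X_zero (p : MvPolynomial (Fin 3) ℂ) (b c : ℕ) : cf (X 0 * p) 0 b c = 0 := by
  rw [cf, coeff_X_mul', if_neg (by simp [expo])]

lemma cf_Y_zero (p : MvPolynomial (Fin 3) ℂ) (a c : ℕ) : cf (X 1 * p) a 0 c = 0 := by
  rw [cf, coeff_X_mul', if_neg (by simp [expo])]

lemma cf_Z_zero (p : MvPolynomial (Fin 3) ℂ) (a b : ℕ) : cf (X 2 * p) a b 0 = 0 := by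
  rw [cf, coeff_X_mul', if_neg (by simp [expo])]

lemma cf_one (a b c : ℕ) : cf 1 a b c = if a = 0 ∧ b = 0 ∧ c = 0 then 1 else 0 := by
  rw [cf, coeff_one]
  refine if_congr ?_ rfl rfl
  rw [eq_comm, Finsupp.ext_iff]
  simp [expo, Fin.forall_fin_succ]

/-! ### Logarithmic derivations in low degree -/

/-- The divisibility conditions cutting out the logarithmic derivations. -/
structure IsLog (θ : Fin 3 → MvPolynomial (Fin 3) ℂ) : Prop where
  y : X 1 ∣ θ 1
  xy : X 0 - X 1 ∣ θ 0 - θ 1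
  xz : X 0 + X 2 ∣ θ 0 + θ 2
  xz' : X 0 - X 2 ∣ θ 0 - θ 2
  yz : X 1 + X 2 ∣ θ 1 + θ 2
  yz' : X 1 - X 2 ∣ θ 1 - θ 2

lemma X_sub_dvd {p : MvPolynomial (Fin 3) ℂ} (h : X 0 - X 2 ∣ p) :
    cf p 0 0 0 = 0 ∧ cf p 0 1 0 = 0 ∧ cf p 0 2 0 = 0 ∧ cf p 1 0 0 + cf p 0 0 1 = 0 ∧
      cf p 1 1 0 + cf p 0 1 1 = 0 ∧ cf p 2 0 0 + cf p 1 0 1 + cf p 0 0 2 = 0 := by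
  obtain ⟨g, rfl⟩ := h
  simp [sub_mul, cf_sub, cf_X_zero, cf_Z_zero, cf_X_succ, cf_Z_succ]

lemma X_add_dvd {p : MvPolynomial (Fin 3) ℂ} (h : X 0 + X 2 ∣ p) :
    cf p 0 0 0 = 0 ∧ cf p 0 1 0 = 0 ∧ cf p 0 2 0 = 0 ∧ cf p 1 0 0 - cf p 0 0 1 = 0 ∧
      cf p 1 1 0 - cf p 0 1 1 = 0 ∧ cf p 2 0 0 - cf p 1 0 1 + cf p 0 0 2 = 0 := by
  obtain ⟨g, rfl⟩ := h
  simp [add_mul, cf_add, cf_X_zero, cf_Z_zero, cf_X_succ, cf_Z_succ]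

lemma Y_sub_dvd {p : MvPolynomial (Fin 3) ℂ} (h : X 1 - X 2 ∣ p) :
    cf p 0 0 0 = 0 ∧ cf p 1 0 0 = 0 ∧ cf p 2 0 0 = 0 ∧ cf p 0 1 0 + cf p 0 0 1 = 0 ∧
      cf p 1 1 0 + cf p 1 0 1 = 0 ∧ cf p 0 2 0 + cf p 0 1 1 + cf p 0 0 2 = 0 := by
  obtain ⟨g, rfl⟩ := h
  simp [sub_mul, cf_sub, cf_Y_zero, cf_Z_zero, cf_Y_succ, cf_Z_succ]

lemma Y_add_dvd {p : MvPolynomial (Fin 3) ℂ} (h : X 1 + X 2 ∣ p) :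
    cf p 0 0 0 = 0 ∧ cf p 1 0 0 = 0 ∧ cf p 2 0 0 = 0 ∧ cf p 0 1 0 - cf p 0 0 1 = 0 ∧
      cf p 1 1 0 - cf p 1 0 1 = 0 ∧ cf p 0 2 0 - cf p 0 1 1 + cf p 0 0 2 = 0 := by
  obtain ⟨g, rfl⟩ := h
  simp [add_mul, cf_add, cf_Y_zero, cf_Z_zero, cf_Y_succ, cf_Z_succ]

lemma XY_dvd {p : MvPolynomial (Fin 3) ℂ} (h : X 0 - X 1 ∣ p) :
    cf p 0 0 0 = 0 ∧ cf p 0 0 1 = 0 ∧ cf p 0 0 2 = 0 ∧ cf p 1 0 0 + cf p 0 1 0 = 0 ∧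
      cf p 1 0 1 + cf p 0 1 1 = 0 ∧ cf p 2 0 0 + cf p 1 1 0 + cf p 0 2 0 = 0 := by
  obtain ⟨g, rfl⟩ := h
  simp [sub_mul, cf_sub, cf_X_zero, cf_Y_zero, cf_X_succ, cf_Y_succ]

lemma Y_dvd {p : MvPolynomial (Fin 3) ℂ} (h : X 1 ∣ p) :
    cf p 0 0 0 = 0 ∧ cf p 1 0 0 = 0 ∧ cf p 0 0 1 = 0 ∧ cf p 2 0 0 = 0 ∧
      cf p 1 0 1 = 0 ∧ cf p 0 0 2 = 0 := by
  obtain ⟨g, rfl⟩ := h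
  simp [cf_Y_zero]

/-- Up to degree two, the first two components of a logarithmic derivation are those of a multiple
of the Euler derivation. -/
lemma IsLog.low {θ : Fin 3 → MvPolynomial (Fin 3) ℂ} (h : IsLog θ) :
    (cf (θ 0) 0 0 0 = 0 ∧ cf (θ 1) 0 0 0 = 0) ∧
    (cf (θ 0) 0 1 0 = 0 ∧ cf (θ 0) 0 0 1 = 0 ∧ cf (θ 1) 1 0 0 = 0 ∧ cf (θ 1) 0 0 1 = 0 ∧
      cf (θ 0) 1 0 0 = cf (θ 1) 0 1 0) ∧
    (cf (θ 0) 0 2 0 = 0 ∧ cf (θ 0) 0 1 1 = 0 ∧ cf (θ 0) 0 0 2 = 0 ∧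
      cf (θ 1) 2 0 0 = 0 ∧ cf (θ 1) 1 0 1 = 0 ∧ cf (θ 1) 0 0 2 = 0 ∧
      cf (θ 0) 2 0 0 = cf (θ 1) 1 1 0 ∧ cf (θ 0) 1 1 0 = cf (θ 1) 0 2 0 ∧
      cf (θ 0) 1 0 1 = cf (θ 1) 0 1 1) := by
  have h1 := Y_dvd h.y
  have h2 := XY_dvd h.xy
  have h3 := X_add_dvd h.xz
  have h4 := X_sub_dvd h.xz'
  have h5 := Y_add_dvd h.yz
  have h6 := Y_sub_dvd h.yz'
  simp only [cf_add, cf_sub] at h2 h3 h4 h5 h6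
  grind

/-- The first component `x θ₁ - y θ₀` of the cross product of the Euler derivation with `θ`. -/
noncomputable def cross (θ : Fin 3 → MvPolynomial (Fin 3) ℂ) : MvPolynomial (Fin 3) ℂ :=
  X 0 * θ 1 - X 1 * θ 0

lemma cross_coeff_eq_zero {θ : Fin 3 → MvPolynomial (Fin 3) ℂ} (h : IsLog θ) (a b c : ℕ)
    (habc : a + b + c < 4) : cf (cross θ) a b c = 0 := by
  obtain ⟨⟨_, _⟩, ⟨_, _, _, _, _⟩, _, _, _, _, _, _, _, _, _⟩ := h.low
  have ha : a < 4 := by omega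
  have hb : b < 4 := by omega
  have hc : c < 4 := by omega
  interval_cases a <;> interval_cases b <;> interval_cases c <;>
    first
    | omega
    | (simp only [cross, cf_sub, cf_X_zero, cf_Y_zero, cf_X_succ _ 0, cf_X_succ _ 1, cf_X_succ _ 2,
        cf_Y_succ _ _ 0, cf_Y_succ _ _ 1, cf_Y_succ _ _ 2]
       simp [*])

lemma expo_eta (m : Fin 3 →₀ ℕ) : expo (m 0) (m 1) (m 2) = m := by
  ext i; fin_cases i <;> rfl

/-- A coefficient of lowest possible degree is linear along `R → R / (x, y, z)`. -/
lemma cf_mul_lowest {p : MvPolynomial (Fin 3) ℂ} {n : ℕ}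
    (hp : ∀ a b c, a + b + c < n → cf p a b c = 0) (r : MvPolynomial (Fin 3) ℂ)
    (a b c : ℕ) (habc : a + b + c = n) : cf (r * p) a b c = constantCoeff r * cf p a b c := by
  classical
  rw [cf, coeff_mul, Finset.sum_eq_single (0, expo a b c)]
  · rfl
  · rintro ⟨u, v⟩ huv hne
    rw [Finset.HasAntidiagonal.mem_antidiagonal] at huv
    have e0 := DFunLike.congr_fun huv 0
    have e1 := DFunLike.congr_fun huv 1
    have e2 := DFunLike.congr_fun huv 2
    simp [expo] at e0 e1 e2
    have hv := hp (v 0) (v 1) (v 2)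
    rw [cf, expo_eta] at hv
    by_cases hlt : v 0 + v 1 + v 2 < n
    · simp [hv hlt]
    · exfalso
      have hu : u = 0 := by
        rw [← expo_eta u]
        ext i; fin_cases i <;> simp [expo] <;> omega
      subst hu
      simp at huv
      exact hne (by rw [huv])
  · simp

/-! ### The semilinear map to `ℂ⁴` -/

/-- Four coefficients that together describe a semilinear surjection from the logarithmic
derivations onto `ℂ⁴`. -/
noncomputable def coords (θ : Fin 3 → MvPolynomial (Fin 3) ℂ) : Fin 4 → ℂ :=
  ![cf (θ 0) 1 0 0, cf (cross θ) 1 3 0, cf (cross θ) 3 1 0, cf (cross θ) 0 3 1]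

lemma coords_add (θ η : Fin 3 → MvPolynomial (Fin 3) ℂ) :
    coords (θ + η) = coords θ + coords η := by
  have h : cross (θ + η) = cross θ + cross η := by
    simp only [cross, Pi.add_apply]; ring
  ext i; fin_cases i <;> simp [coords, h, cf_add]

lemma coords_smul (r : MvPolynomial (Fin 3) ℂ) {θ : Fin 3 → MvPolynomial (Fin 3) ℂ}
    (hθ : IsLog θ) : coords (r • θ) = constantCoeff r • coords θ := by
  have h : cross (r • θ) = r * cross θ := by
    simp only [cross, Pi.smul_apply, smul_eq_mul]; ring
  have h0 : ∀ a b c, a + b + c < 1 → cf (θ 0) a b c = 0 := by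
    intro a b c habc
    obtain ⟨rfl, rfl, rfl⟩ : a = 0 ∧ b = 0 ∧ c = 0 := by omega
    exact hθ.low.1.1
  have h4 := cross_coeff_eq_zero hθ
  ext i
  fin_cases i
  · simpa [coords] using cf_mul_lowest h0 r 1 0 0 rfl
  · simpa [coords, h] using cf_mul_lowest h4 r 1 3 0 rfl
  · simpa [coords, h] using cf_mul_lowest h4 r 3 1 0 rfl
  · simpa [coords, h] using cf_mul_lowest h4 r 0 3 1 rfl

/-! ### Four derivations with independent images -/

/-- The Euler derivation together with three cubic logarithmic derivations. -/
noncomputable def gens : Fin 4 → Fin 3 → MvPolynomial (Fin 3) ℂ :=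
  ![![X 0, X 1, X 2],
    ![X 1 * (X 0 * X 0 - X 2 * X 2), X 1 * (X 1 * X 1 - X 2 * X 2), 0],
    ![(X 0 * X 0 - X 2 * X 2) * (X 0 - X 1), 0, 0],
    ![X 1 * (X 1 * X 2), X 1 * (X 0 * X 2), X 1 * (X 0 * X 1)]]

lemma isLog_gens (i : Fin 4) : IsLog (gens i) := by
  fin_cases i
  · constructor <;> simp [gens]
  · constructor <;> simp only [gens, Fin.mk_one, Matrix.cons_val]
    · exact ⟨_, rfl⟩
    · exact ⟨X 1 * (X 0 + X 1), by ring⟩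
    · exact ⟨X 1 * (X 0 - X 2), by ring⟩
    · exact ⟨X 1 * (X 0 + X 2), by ring⟩
    · exact ⟨X 1 * (X 1 - X 2), by ring⟩
    · exact ⟨X 1 * (X 1 + X 2), by ring⟩
  · constructor <;> simp only [gens, Fin.reduceFinMk, Matrix.cons_val]
    · simp
    · exact ⟨X 0 * X 0 - X 2 * X 2, by ring⟩
    · exact ⟨(X 0 - X 2) * (X 0 - X 1), by ring⟩
    · exact ⟨(X 0 + X 2) * (X 0 - X 1), by ring⟩
    · simp
    · simp
  · constructor <;> simp only [gens, Fin.reduceFinMk, Matrix.cons_val]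
    · exact ⟨_, rfl⟩
    · exact ⟨- (X 1 * X 2), by ring⟩
    · exact ⟨X 1 * X 1, by ring⟩
    · exact ⟨- (X 1 * X 1), by ring⟩
    · exact ⟨X 1 * X 0, by ring⟩
    · exact ⟨- (X 1 * X 0), by ring⟩

lemma coords_of_cross {θ : Fin 3 → MvPolynomial (Fin 3) ℂ} (p q : MvPolynomial (Fin 3) ℂ)
    (hp : θ 0 = p) (hq : cross θ = q) :
    coords θ = ![cf p 1 0 0, cf q 1 3 0, cf q 3 1 0, cf q 0 3 1] := by
  rw [coords, hp, hq]

lemma cf_X_pos (p : MvPolynomial (Fin 3) ℂ) (a b c : ℕ) (h : 0 < a) :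
    cf (X 0 * p) a b c = cf p (a - 1) b c := by
  obtain ⟨a, rfl⟩ := Nat.exists_eq_add_of_lt h
  simpa using cf_X_succ p a b c

lemma cf_Y_pos (p : MvPolynomial (Fin 3) ℂ) (a b c : ℕ) (h : 0 < b) :
    cf (X 1 * p) a b c = cf p a (b - 1) c := by
  obtain ⟨b, rfl⟩ := Nat.exists_eq_add_of_lt h
  simpa using cf_Y_succ p a b c

lemma cf_Z_pos (p : MvPolynomial (Fin 3) ℂ) (a b c : ℕ) (h : 0 < c) :
    cf (X 2 * p) a b c = cf p a b (c - 1) := by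
  obtain ⟨c, rfl⟩ := Nat.exists_eq_add_of_lt h
  simpa using cf_Z_succ p a b c

/-- The signs by which `coords` of `gens` differ from the standard basis. -/
def sgn : Fin 4 → ℂ := ![1, 1, -1, -1]

lemma coords_gens (i : Fin 4) : coords (gens i) = Pi.single i (sgn i) := by
  fin_cases i
  · rw [coords_of_cross (X 0 * 1) 0 (by simp [gens]) (by simp [cross, gens]; ring)]
    ext j; fin_cases j <;>
      simp [-mul_one, sgn, cf_one, cf_X_pos, cf_zero]
  · rw [coords_of_cross (X 1 * (X 0 * (X 0 * 1)) - X 1 * (X 2 * (X 2 * 1)))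
      (X 0 * (X 1 * (X 1 * (X 1 * 1))) - X 0 * (X 1 * (X 2 * (X 2 * 1)))
        - (X 0 * (X 0 * (X 1 * (X 1 * 1))) - X 1 * (X 1 * (X 2 * (X 2 * 1)))))
      (by simp [gens]; ring) (by simp [cross, gens]; ring)]
    ext j; fin_cases j <;>
      simp [-mul_one, sgn, cf_one, cf_sub, cf_X_pos, cf_Y_pos, cf_Z_pos, cf_X_zero, cf_Y_zero,
        cf_Z_zero]
  · rw [coords_of_cross (X 0 * (X 0 * (X 0 * 1)) - X 0 * (X 0 * (X 1 * 1))
        - (X 0 * (X 2 * (X 2 * 1)) - X 1 * (X 2 * (X 2 * 1))))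
      (X 0 * (X 0 * (X 1 * (X 1 * 1))) - X 0 * (X 0 * (X 0 * (X 1 * 1)))
        - (X 1 * (X 1 * (X 2 * (X 2 * 1))) - X 0 * (X 1 * (X 2 * (X 2 * 1)))))
      (by simp [gens]; ring) (by simp [cross, gens]; ring)]
    ext j; fin_cases j <;>
      simp [-mul_one, sgn, cf_one, cf_sub, cf_X_pos, cf_Y_pos, cf_Z_pos, cf_X_zero, cf_Y_zero,
        cf_Z_zero]
  · rw [coords_of_cross (X 1 * (X 1 * (X 2 * 1)))
      (X 0 * (X 0 * (X 1 * (X 2 * 1))) - X 1 * (X 1 * (X 1 * (X 2 * 1))))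
      (by simp [gens]) (by simp [cross, gens]; ring)]
    ext j; fin_cases j <;>
      simp [-mul_one, sgn, cf_one, cf_sub, cf_X_pos, cf_Y_pos, cf_Z_pos, cf_X_zero, cf_Y_zero,
        cf_Z_zero]

/-! ### Failure of freeness -/

/-- A module of derivations whose elements are exactly the logarithmic ones is not free. -/
lemma not_free (D : Submodule (MvPolynomial (Fin 3) ℂ) (Fin 3 → MvPolynomial (Fin 3) ℂ))
    (hD : ∀ θ, θ ∈ D ↔ IsLog θ) : ¬ Module.Free (MvPolynomial (Fin 3) ℂ) D := by
  intro hfree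
  let b := Module.Free.chooseBasis (MvPolynomial (Fin 3) ℂ) D
  have hli : LinearIndependent (MvPolynomial (Fin 3) ℂ)
      (fun i => (b i : Fin 3 → MvPolynomial (Fin 3) ℂ)) :=
    b.linearIndependent.map' D.subtype D.ker_subtype
  have : Finite (Module.Free.ChooseBasisIndex (MvPolynomial (Fin 3) ℂ) D) := hli.finite
  have := Fintype.ofFinite (Module.Free.ChooseBasisIndex (MvPolynomial (Fin 3) ℂ) D)
  -- A free `D` has rank at most three; `L` below forces at least four basis elements.
  have hle := hli.fintype_card_le_finrank
  rw [Module.finrank_fin_fun] at hle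
  let L : D →ₛₗ[(constantCoeff : MvPolynomial (Fin 3) ℂ →+* ℂ)] (Fin 4 → ℂ) :=
    { toFun := fun θ => coords θ
      map_add' := fun θ η => coords_add θ η
      map_smul' := fun r θ => coords_smul r ((hD _).1 θ.2) }
  have : RingHomSurjective (constantCoeff : MvPolynomial (Fin 3) ℂ →+* ℂ) :=
    ⟨fun a => ⟨C a, constantCoeff_C _ a⟩⟩
  have hsurj : Submodule.map L ⊤ = ⊤ := by
    rw [eq_top_iff, ← (Pi.basisFun ℂ (Fin 4)).span_eq, Submodule.span_le]
    rintro _ ⟨i, rfl⟩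
    have hi : L ⟨gens i, (hD _).2 (isLog_gens i)⟩ = Pi.single i (sgn i) := coords_gens i
    have hmem : sgn i • L ⟨gens i, (hD _).2 (isLog_gens i)⟩ ∈ Submodule.map L ⊤ :=
      Submodule.smul_mem _ _ (Submodule.mem_map_of_mem trivial)
    rw [hi, ← Pi.single_smul] at hmem
    have hsq : sgn i • sgn i = 1 := by fin_cases i <;> simp [sgn]
    rw [hsq] at hmem
    simpa using hmem
  rw [← b.span_eq, Submodule.map_span, ← Set.range_comp] at hsurj
  have hcard := finrank_range_le_card (R := ℂ) (L ∘ b)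
  rw [Set.finrank, hsurj, finrank_top, Module.finrank_fin_fun] at hcard
  omega

end IdealRestriction

/-- The restriction of the `D₄` ideal arrangement to `ker(x₂−x₃)`, i.e. the
3-arrangement with defining polynomial `y(x−y)(x²−z²)(y²−z²)`, is not free:
its module of logarithmic derivations `D(A) = {θ : θ(α_H) ∈ α_H·ℂ[x,y,z]}`
(a derivation `θ = Σ θᵢ ∂ᵢ` is recorded by its coefficient vector
`θ : Fin 3 → ℂ[x,y,z]`) is not a free `ℂ[x,y,z]`-module. -/
theorem stmt_19 :
    let R := MvPolynomial (Fin 3) ℂ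
    let forms : Set R :=
      { X 1, X 0 - X 1, X 0 + X 2, X 0 - X 2, X 1 + X 2, X 1 - X 2 }
    let D : Submodule R (Fin 3 → R) :=
      ⨅ α ∈ forms, Submodule.comap
        (LinearMap.lsum R (fun _ : Fin 3 => R) R
          (fun i => LinearMap.toSpanSingleton R R (pderiv i α)))
        (Ideal.span {α})
    ¬ Module.Free R ↥D := by
  intro R forms D
  refine IdealRestriction.not_free D fun θ => ?_
  simp only [D, forms, Submodule.mem_iInf, Set.mem_insert_iff, Set.mem_singleton_iff,
    forall_eq_or_imp, forall_eq, Submodule.mem_comap]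
  simp [R, Fin.sum_univ_three, pderiv_X, Pi.single_apply, ← sub_eq_add_neg]
  have hdvd : ∀ p q : MvPolynomial (Fin 3) ℂ, p ∈ Ideal.span {q} ↔ q ∣ p :=
    fun _ _ => Ideal.mem_span_singleton
  exact ⟨fun ⟨h1, h2, h3, h4, h5, h6⟩ => ⟨(hdvd _ _).1 h1, (hdvd _ _).1 h2, (hdvd _ _).1 h3,
      (hdvd _ _).1 h4, (hdvd _ _).1 h5, (hdvd _ _).1 h6⟩,
    fun ⟨h1, h2, h3, h4, h5, h6⟩ => ⟨(hdvd _ _).2 h1, (hdvd _ _).2 h2, (hdvd _ _).2 h3,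
      (hdvd _ _).2 h4, (hdvd _ _).2 h5, (hdvd _ _).2 h6⟩⟩
end
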